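/- lim_{x→0⁺} [12x⁴(x+1)²([ψ'(x)]² + ψ''(x)) − x² − 12]/x = 0. -/

import Mathlib

/-- The digamma function `ψ(x) = Γ'(x)/Γ(x)`. -/
noncomputable def digamma (x : ℝ) : ℝ := deriv Real.Gamma x / Real.Gamma x

/-! The recurrence `ψ(x + 1) = ψ(x) + 1/x` isolates the pole of `ψ` at `0`: with `a(x) = ψ'(x + 1)`
and `b(x) = ψ''(x + 1)`, which are continuous at `0`, we have `ψ'(x) = a(x) + 1/x²` and
`ψ''(x) = b(x) - 2/x³`. Hence `x⁴ (ψ'(x)² + ψ''(x)) = 1 - 2x + O(x²)`, and the factor `(x + 1)²`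
cancels the linear term because `(x + 1)² (1 - 2x) = 1 - 3x² - 2x³`. -/

open Filter Topology
open scoped Nat

lemma analyticAt_complexGamma {s : ℂ} (hs : ∀ m : ℕ, s ≠ -m) : AnalyticAt ℂ Complex.Gamma s := by
  have hinv : AnalyticAt ℂ (fun z ↦ (Complex.Gamma z)⁻¹) s :=
    Complex.differentiable_one_div_Gamma.analyticAt s
  simpa only [inv_inv] using hinv.fun_inv (inv_ne_zero (Complex.Gamma_ne_zero hs))

lemma analyticAt_realGamma {x : ℝ} (hx : ∀ m : ℕ, x ≠ -m) : AnalyticAt ℝ Real.Gamma x :=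
  (analyticAt_complexGamma (s := x) fun m ↦ mod_cast hx m).re_ofReal

lemma eventually_ne_neg_natCast {x : ℝ} (hx : ∀ m : ℕ, x ≠ -m) :
    ∀ᶠ y : ℝ in 𝓝 x, ∀ m : ℕ, y ≠ -m := by
  -- With Mathlib's junk value `0` at the poles of `Γ`, these are exactly the zeros of `Real.Gamma`.
  filter_upwards [(analyticAt_realGamma hx).continuousAt.eventually_ne (Real.Gamma_ne_zero hx)]
    with y hy
  simpa only [ne_eq, Real.Gamma_eq_zero_iff, not_exists] using hy

lemma analyticAt_digamma {x : ℝ} (hx : ∀ m : ℕ, x ≠ -m) : AnalyticAt ℝ digamma x :=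
  (analyticAt_realGamma hx).deriv.div (analyticAt_realGamma hx) (Real.Gamma_ne_zero hx)

lemma digamma_add_one {x : ℝ} (hx : ∀ m : ℕ, x ≠ -m) : digamma (x + 1) = digamma x + x⁻¹ := by
  have hx₀ : x ≠ 0 := by simpa using hx 0
  have hΓ : (fun y ↦ Real.Gamma (y + 1)) =ᶠ[𝓝 x] fun y ↦ y * Real.Gamma y :=
    (eventually_ne_nhds hx₀).mono fun _ ↦ Real.Gamma_add_one
  calc
    digamma (x + 1) = logDeriv (fun y ↦ Real.Gamma (y + 1)) x := by
      rw [logDeriv_apply, deriv_comp_add_const, digamma]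
    _ = logDeriv (fun y ↦ y * Real.Gamma y) x := (logDeriv_congr_nhds hΓ).eq_of_nhds
    _ = 1 / x + logDeriv Real.Gamma x := by
      rw [logDeriv_mul x hx₀ (Real.Gamma_ne_zero hx) differentiableAt_fun_id
        (Real.differentiableAt_Gamma hx), logDeriv_id']
    _ = digamma x + x⁻¹ := by rw [one_div, add_comm, logDeriv_apply, digamma]

lemma iteratedDeriv_digamma_add_one (n : ℕ) {x : ℝ} (hx : ∀ m : ℕ, x ≠ -m) :
    iteratedDeriv n digamma (x + 1) = iteratedDeriv n digamma x + (-1) ^ n * n ! / x ^ (n + 1) := by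
  have hx₀ : x ≠ 0 := by simpa using hx 0
  have hrec : (fun y ↦ digamma (y + 1)) =ᶠ[𝓝 x] digamma + Inv.inv :=
    (eventually_ne_neg_natCast hx).mono fun _ ↦ digamma_add_one
  have hinv : iteratedDeriv n Inv.inv x = (-1) ^ n * n ! / x ^ (n + 1) := by
    rw [iteratedDeriv_eq_iterate, iter_deriv_inv, div_eq_mul_inv, ← zpow_natCast x, ← zpow_neg]
    push_cast
    ring_nf
  calc
    iteratedDeriv n digamma (x + 1) = iteratedDeriv n (fun y ↦ digamma (y + 1)) x := by
      rw [iteratedDeriv_comp_add_const]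
    _ = iteratedDeriv n (digamma + Inv.inv) x := hrec.iteratedDeriv_eq n
    _ = iteratedDeriv n digamma x + iteratedDeriv n Inv.inv x :=
      iteratedDeriv_add (analyticAt_digamma hx).contDiffAt (contDiffAt_inv ℝ hx₀)
    _ = iteratedDeriv n digamma x + (-1) ^ n * n ! / x ^ (n + 1) := by rw [hinv]

lemma deriv_digamma_eq {x : ℝ} (hx : ∀ m : ℕ, x ≠ -m) :
    deriv digamma x = deriv digamma (x + 1) + 1 / x ^ 2 := by
  rw [← iteratedDeriv_one, iteratedDeriv_digamma_add_one 1 hx, Nat.factorial_one]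
  ring

lemma deriv_deriv_digamma_eq {x : ℝ} (hx : ∀ m : ℕ, x ≠ -m) :
    deriv (deriv digamma) x = deriv (deriv digamma) (x + 1) - 2 / x ^ 3 := by
  rw [← iteratedDeriv_one (f := digamma), ← iteratedDeriv_succ,
    iteratedDeriv_digamma_add_one 2 hx, Nat.factorial_two]
  ring

lemma eventually_nhdsNE_zero_ne_neg_natCast : ∀ᶠ x : ℝ in 𝓝[≠] 0, ∀ m : ℕ, x ≠ -m := by
  filter_upwards [self_mem_nhdsWithin, nhdsWithin_le_nhds (lt_mem_nhds neg_one_lt_zero)]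
    with x hx₀ hx₁ m hm
  rcases m.eq_zero_or_pos with rfl | hm₁
  · exact hx₀ (by simpa using hm)
  · have : (1 : ℝ) ≤ m := mod_cast hm₁
    linarith

theorem stmt_17_general :
    Tendsto
      (fun x : ℝ =>
        (12 * x ^ 4 * (x + 1) ^ 2 *
            ((deriv digamma x) ^ 2 + deriv (deriv digamma) x) - x ^ 2 - 12) / x)
      (𝓝[≠] 0) (𝓝 0) := by
  have hψ : AnalyticAt ℝ digamma 1 := analyticAt_digamma fun m ↦ by bound
  have ha : ContinuousAt (fun x ↦ deriv digamma (x + 1)) 0 :=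
    hψ.deriv.continuousAt.comp_of_eq (by fun_prop) (zero_add 1)
  have hb : ContinuousAt (fun x ↦ deriv (deriv digamma) (x + 1)) 0 :=
    hψ.deriv.deriv.continuousAt.comp_of_eq (by fun_prop) (zero_add 1)
  have hremainder : ContinuousAt (fun x ↦ x * (12 * (x + 1) ^ 2 * (2 * deriv digamma (x + 1)
      + x ^ 2 * (deriv digamma (x + 1) ^ 2 + deriv (deriv digamma) (x + 1))) - 37 - 24 * x)) 0 := by
    fun_prop
  have hlim := hremainder.tendsto.mono_left (nhdsWithin_le_nhds (s := {0}ᶜ))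
  rw [zero_mul] at hlim
  refine hlim.congr' ?_
  filter_upwards [self_mem_nhdsWithin, eventually_nhdsNE_zero_ne_neg_natCast] with x hx₀ hx
  have hx₀ : x ≠ 0 := hx₀
  rw [deriv_digamma_eq hx, deriv_deriv_digamma_eq hx]
  field_simp
  ring

theorem stmt_17 :
    Filter.Tendsto
      (fun x : ℝ =>
        (12 * x ^ 4 * (x + 1) ^ 2 *
            ((deriv digamma x) ^ 2 + deriv (deriv digamma) x) - x ^ 2 - 12) / x)
      (nhdsWithin 0 (Set.Ioi 0)) (nhds 0) :=
  stmt_17_general.mono_left (nhdsGT_le_nhdsNE 0)
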